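/- arXiv:0901.2280 — 2 statements merged into one kernel-verified Lean document; each statement's English description precedes it below -/
import Mathlib

section
/- Let n ≥ 2, r = (1-n)/2, let h be a real harmonic polynomial on ℝⁿ homogeneous of degree l, let d ≥ 0, p = 2(l+d-r), and let g_{p,l} be as above. Then the function f(t,x) = g_{p,l}(t,x) · h(x) · ((1-it)² + ‖x‖²)^{-p/2} is smooth on ℝ^{1+n} and satisfies □f = 0. -/
open Function

noncomputable def pt {n : ℕ} (f : ℝ × (Fin n → ℝ) → ℂ) (p : ℝ × (Fin n → ℝ)) : ℂ :=
  deriv (fun s => f (s, p.2)) p.1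

noncomputable def px {n : ℕ} (i : Fin n) (f : ℝ × (Fin n → ℝ) → ℂ) (p : ℝ × (Fin n → ℝ)) : ℂ :=
  deriv (fun s => f (p.1, Function.update p.2 i s)) (p.2 i)

/-- The wave operator `□ = -∂_t² + Σᵢ ∂_{xᵢ}²`. -/
noncomputable def Box (n : ℕ) (f : ℝ × (Fin n → ℝ) → ℂ) : ℝ × (Fin n → ℝ) → ℂ :=
  fun p => -pt (pt f) p + ∑ i, px i (px i f) p

open Polynomial

noncomputable def gegenbauer (α : ℝ) : ℕ → Polynomial ℝ
  | 0 => 1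
  | 1 => Polynomial.C (2 * α) * Polynomial.X
  | (d + 2) =>
      Polynomial.C ((2 * ((d : ℝ) + 1 + α)) / ((d : ℝ) + 2)) * Polynomial.X
          * gegenbauer α (d + 1)
        - Polynomial.C (((d : ℝ) + 2 * α) / ((d : ℝ) + 2)) * gegenbauer α d

/-- `q(t,x) = -t² + ‖x‖²`. -/
noncomputable def qfun {n : ℕ} (t : ℝ) (x : Fin n → ℝ) : ℝ := -t ^ 2 + ∑ i, (x i) ^ 2

/-- `λ(t,x) = ((1-q)² + 4‖x‖²)^{1/2}`. -/
noncomputable def lamfun {n : ℕ} (t : ℝ) (x : Fin n → ℝ) : ℝ :=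
  Real.sqrt ((1 - qfun t x) ^ 2 + 4 * ∑ i, (x i) ^ 2)

/-- `g_{p,l}(t,x) = λ^d · C_d^{l-r}((1-q)/λ)`. -/
noncomputable def gpl {n : ℕ} (r : ℝ) (l d : ℕ) (t : ℝ) (x : Fin n → ℝ) : ℝ :=
  (lamfun t x) ^ d * (gegenbauer ((l : ℝ) - r) d).eval ((1 - qfun t x) / lamfun t x)


/-!
Put `c = (1 - X) / (1 + X)`. Translating the form `‖x‖² - t²` by the imaginary time `i c` and
clearing denominators gives `P = (1 + X)² (‖x‖² - (t + i c)²)`, a power series in `X` with constant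
coefficient `w = (1 - i t)² + ‖x‖²`, never in `(-∞, 0]`. Write `α = l - r = l + (n - 1) / 2`.

By Euler's identity and harmonicity `h (‖x‖² - t²) ^ (-α)` solves the wave equation, hence so does
its time translate, and so do the coefficients in `X` of `h P ^ (-α)`. On the other hand
`P = w (1 - 2 y (λ / w) X + (λ / w)² X²)` with `y = (1 - q) / λ` and `λ = |w|`, so the generating
function of the Gegenbauer polynomials shows that the `d`-th coefficient of `h P ^ (-α)` is
`λ ^ d C_d^α(y) h w ^ (-α - d)`, which is `f`.
-/

open Finset.HasAntidiagonal (antidiagonal)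
open PowerSeries (constantCoeff derivative)
open scoped PowerSeries Topology

section CpowSeries

/-- The coefficients of the complex power `P ^ β`, by the recursion that comparing coefficients in
`P F' = β P' F` imposes. -/
noncomputable def cpowCoeff (P : ℂ⟦X⟧) (β : ℂ) : ℕ → ℂ
  | 0 => constantCoeff P ^ β
  | n + 1 =>
      (∑ ij ∈ (antidiagonal n).attach, (β * (ij.1.1 + 1) - ij.1.2) *
        PowerSeries.coeff (ij.1.1 + 1) P * cpowCoeff P β ij.1.2) / ((n + 1) * constantCoeff P)
decreasing_by exact Nat.lt_succ_of_le (Finset.HasAntidiagonal.antidiagonal.snd_le ij.2)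

/-- The principal complex power `P ^ β` of a formal power series `P` with nonzero constant
coefficient. -/
noncomputable def cpowSeries (P : ℂ⟦X⟧) (β : ℂ) : ℂ⟦X⟧ := PowerSeries.mk (cpowCoeff P β)

variable {P F G : ℂ⟦X⟧} {β : ℂ}

theorem constantCoeff_cpowSeries (P : ℂ⟦X⟧) (β : ℂ) :
    constantCoeff (cpowSeries P β) = constantCoeff P ^ β := by
  rw [← PowerSeries.coeff_zero_eq_constantCoeff_apply, cpowSeries, PowerSeries.coeff_mk, cpowCoeff]

theorem coeff_succ_cpowSeries (P : ℂ⟦X⟧) (β : ℂ) (n : ℕ) :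
    PowerSeries.coeff (n + 1) (cpowSeries P β) =
      (∑ ij ∈ antidiagonal n, (β * (ij.1 + 1) - ij.2) * PowerSeries.coeff (ij.1 + 1) P *
        PowerSeries.coeff ij.2 (cpowSeries P β)) / ((n + 1) * constantCoeff P) := by
  simp only [cpowSeries, PowerSeries.coeff_mk]
  rw [cpowCoeff, Finset.sum_attach (antidiagonal n) fun ij : ℕ × ℕ =>
    (β * (ij.1 + 1) - ij.2) * PowerSeries.coeff (ij.1 + 1) P * cpowCoeff P β ij.2]

theorem coeff_X_mul_derivative {R : Type*} [CommSemiring R] (F : R⟦X⟧) (n : ℕ) :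
    PowerSeries.coeff n (PowerSeries.X * derivative R F) = n * PowerSeries.coeff n F := by
  cases n with
  | zero => simp
  | succ n =>
    rw [PowerSeries.coeff_succ_X_mul, PowerSeries.coeff_derivative, mul_comm]
    push_cast
    rfl

theorem mul_derivative_cpowSeries (hP : constantCoeff P ≠ 0) (β : ℂ) :
    P * derivative ℂ (cpowSeries P β) =
      PowerSeries.C β * derivative ℂ P * cpowSeries P β := by
  suffices h : P * (PowerSeries.X * derivative ℂ (cpowSeries P β)) =
      PowerSeries.C β * (PowerSeries.X * derivative ℂ P * cpowSeries P β) from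
    mul_left_cancel₀ PowerSeries.X_ne_zero (by linear_combination h)
  ext n
  rw [PowerSeries.coeff_C_mul, PowerSeries.coeff_mul, PowerSeries.coeff_mul]
  simp only [coeff_X_mul_derivative]
  cases n with
  | zero => simp
  | succ n =>
    have hrec := coeff_succ_cpowSeries P β n
    rw [eq_div_iff (mul_ne_zero n.cast_add_one_ne_zero hP)] at hrec
    rw [Finset.Nat.sum_antidiagonal_succ, Finset.Nat.sum_antidiagonal_succ, Nat.cast_zero,
      zero_mul, zero_mul, zero_add, Finset.mul_sum, ← eq_sub_iff_add_eq,
      ← Finset.sum_sub_distrib, PowerSeries.coeff_zero_eq_constantCoeff_apply, Nat.cast_succ]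
    calc constantCoeff P * ((n + 1) * PowerSeries.coeff (n + 1) (cpowSeries P β))
        = PowerSeries.coeff (n + 1) (cpowSeries P β) * ((n + 1) * constantCoeff P) := by ring
      _ = _ := hrec.trans (Finset.sum_congr rfl fun ij _ => by push_cast; ring)

theorem mul_cpowSeries_neg_eq_C (hP : constantCoeff P ≠ 0)
    (hF : P * derivative ℂ F = PowerSeries.C β * derivative ℂ P * F) :
    F * cpowSeries P (-β) =
      PowerSeries.C (constantCoeff F * constantCoeff P ^ (-β)) := by
  have hP0 : P ≠ 0 := by rintro rfl; simp at hP
  refine PowerSeries.derivative.ext (mul_left_cancel₀ hP0 ?_) ?_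
  · have hG := mul_derivative_cpowSeries hP (-β)
    rw [map_neg] at hG
    rw [Derivation.leibniz, PowerSeries.derivative_C, smul_eq_mul, smul_eq_mul]
    linear_combination F * hG + cpowSeries P (-β) * hF
  · rw [map_mul, constantCoeff_cpowSeries, PowerSeries.constantCoeff_C]

theorem eq_of_mul_derivative_eq (hP : constantCoeff P ≠ 0)
    (hF : P * derivative ℂ F = PowerSeries.C β * derivative ℂ P * F)
    (hG : P * derivative ℂ G = PowerSeries.C β * derivative ℂ P * G)
    (h0 : constantCoeff F = constantCoeff G) : F = G := by
  have hne : cpowSeries P (-β) ≠ 0 := fun h => by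
    have h1 := constantCoeff_cpowSeries P (-β)
    rw [h, map_zero] at h1
    exact Complex.cpow_ne_zero_iff.2 (.inl hP) h1.symm
  refine mul_right_cancel₀ hne ?_
  rw [mul_cpowSeries_neg_eq_C hP hF, mul_cpowSeries_neg_eq_C hP hG, h0]

theorem cpowSeries_eq_mul (hP : constantCoeff P ≠ 0) (β : ℂ) :
    cpowSeries P β = P * cpowSeries P (β - 1) := by
  have hG := mul_derivative_cpowSeries hP (β - 1)
  rw [map_sub, map_one] at hG
  refine eq_of_mul_derivative_eq hP (mul_derivative_cpowSeries hP β) ?_ ?_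
  · rw [Derivation.leibniz, smul_eq_mul, smul_eq_mul]
    linear_combination P * hG
  · rw [map_mul, constantCoeff_cpowSeries, constantCoeff_cpowSeries, Complex.cpow_sub _ _ hP,
      Complex.cpow_one, mul_div_cancel₀ _ hP]

theorem contDiff_cpow_const {E : Type*} [NormedAddCommGroup E] [NormedSpace ℝ E]
    {k : WithTop ℕ∞} {w : E → ℂ} (hw : ContDiff ℝ k w) (hs : ∀ z, w z ∈ Complex.slitPlane)
    (β : ℂ) : ContDiff ℝ k fun z => w z ^ β := by
  simp only [Complex.cpow_def_of_ne_zero (Complex.slitPlane_ne_zero (hs _))]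
  refine ContDiff.cexp (ContDiff.mul ?_ contDiff_const)
  refine contDiff_iff_contDiffAt.2 fun z => ?_
  exact ((Complex.contDiffAt_log (hs z)).restrict_scalars ℝ).comp z hw.contDiffAt

theorem contDiff_coeff_cpowSeries {E : Type*} [NormedAddCommGroup E] [NormedSpace ℝ E]
    {k : WithTop ℕ∞} {P : E → ℂ⟦X⟧} (hP : ∀ d, ContDiff ℝ k fun z => PowerSeries.coeff d (P z))
    (hs : ∀ z, constantCoeff (P z) ∈ Complex.slitPlane) (β : ℂ) (d : ℕ) :
    ContDiff ℝ k fun z => PowerSeries.coeff d (cpowSeries (P z) β) := by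
  have hP0 : ContDiff ℝ k fun z => constantCoeff (P z) := by
    simpa only [PowerSeries.coeff_zero_eq_constantCoeff_apply] using hP 0
  induction d using Nat.strong_induction_on with
  | _ d ih =>
    cases d with
    | zero =>
      simp only [PowerSeries.coeff_zero_eq_constantCoeff_apply, constantCoeff_cpowSeries]
      exact contDiff_cpow_const hP0 hs β
    | succ d =>
      simp only [coeff_succ_cpowSeries, div_eq_mul_inv]
      refine (ContDiff.sum fun ij hij => ?_).mul ((contDiff_const.mul hP0).inv fun z =>
        mul_ne_zero d.cast_add_one_ne_zero (Complex.slitPlane_ne_zero (hs z)))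
      exact (contDiff_const.mul (hP _)).mul
        (ih _ (Nat.lt_succ_of_le (Finset.HasAntidiagonal.antidiagonal.snd_le hij)))

end CpowSeries

section HasCoeffDerivAt

/-- `F'` is the coefficientwise derivative at `τ` of the family `F` of formal power series. -/
def HasCoeffDerivAt {𝕜 A : Type*} [NontriviallyNormedField 𝕜] [NormedRing A] [NormedAlgebra 𝕜 A]
    (F : 𝕜 → A⟦X⟧) (F' : A⟦X⟧) (τ : 𝕜) : Prop :=
  ∀ d, HasDerivAt (fun s => PowerSeries.coeff d (F s)) (PowerSeries.coeff d F') τ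

namespace HasCoeffDerivAt

variable {𝕜 A : Type*} [NontriviallyNormedField 𝕜] [NormedRing A] [NormedAlgebra 𝕜 A]
  {F G : 𝕜 → A⟦X⟧} {F' G' : A⟦X⟧} {τ : 𝕜}

theorem unique (hF : HasCoeffDerivAt F F' τ) (hG : HasCoeffDerivAt F G' τ) : F' = G' :=
  PowerSeries.ext fun d => (hF d).unique (hG d)

theorem congr_of_eventuallyEq (hF : HasCoeffDerivAt F F' τ) (h : G =ᶠ[𝓝 τ] F) :
    HasCoeffDerivAt G F' τ := fun d =>
  (hF d).congr_of_eventuallyEq (h.fun_comp (PowerSeries.coeff d))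

theorem const (C : A⟦X⟧) (τ : 𝕜) : HasCoeffDerivAt (fun _ => C) 0 τ := fun _ => by
  simpa using hasDerivAt_const τ _

theorem add (hF : HasCoeffDerivAt F F' τ) (hG : HasCoeffDerivAt G G' τ) :
    HasCoeffDerivAt (fun s => F s + G s) (F' + G') τ := fun d => by
  simpa only [map_add] using (hF d).fun_add (hG d)

theorem const_sub (C : A⟦X⟧) (hF : HasCoeffDerivAt F F' τ) :
    HasCoeffDerivAt (fun s => C - F s) (-F') τ := fun d => by
  simpa only [map_sub, map_neg] using (hF d).const_sub _

theorem mul (hF : HasCoeffDerivAt F F' τ) (hG : HasCoeffDerivAt G G' τ) :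
    HasCoeffDerivAt (fun s => F s * G s) (F' * G τ + F τ * G') τ := fun d => by
  simp only [map_add, PowerSeries.coeff_mul, ← Finset.sum_add_distrib]
  exact HasDerivAt.fun_sum fun ij _ => (hF ij.1).mul (hG ij.2)

theorem const_mul (C : A⟦X⟧) (hF : HasCoeffDerivAt F F' τ) :
    HasCoeffDerivAt (fun s => C * F s) (C * F') τ := by
  simpa only [zero_mul, zero_add] using (const C τ).mul hF

theorem C {f : 𝕜 → A} {f' : A} (hf : HasDerivAt f f' τ) :
    HasCoeffDerivAt (fun s => PowerSeries.C (f s)) (PowerSeries.C f') τ := fun d => by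
  simp only [PowerSeries.coeff_C]
  split_ifs
  exacts [hf, hasDerivAt_const _ _]

theorem C_mul {f : 𝕜 → A} {f' : A} (hf : HasDerivAt f f' τ) (G : A⟦X⟧) :
    HasCoeffDerivAt (fun s => PowerSeries.C (f s) * G) (PowerSeries.C f' * G) τ := by
  simpa only [mul_zero, add_zero] using (C hf).mul (const G τ)

theorem formalDerivative {𝕜 A : Type*} [NontriviallyNormedField 𝕜] [NormedCommRing A]
    [NormedAlgebra 𝕜 A] {F : 𝕜 → A⟦X⟧} {F' : A⟦X⟧} {τ : 𝕜} (hF : HasCoeffDerivAt F F' τ) :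
    HasCoeffDerivAt (fun s => derivative A (F s)) (derivative A F') τ := fun d => by
  simpa only [PowerSeries.coeff_derivative] using (hF (d + 1)).mul_const _

section Cpow

variable {𝕜 : Type*} [NontriviallyNormedField 𝕜] [NormedAlgebra 𝕜 ℂ] {P : 𝕜 → ℂ⟦X⟧} {P' : ℂ⟦X⟧}
  {τ : 𝕜}

theorem constantCoeff_cpow (hP : HasCoeffDerivAt P P' τ)
    (hs : constantCoeff (P τ) ∈ Complex.slitPlane) (β : ℂ) :
    HasDerivAt (fun s => constantCoeff (cpowSeries (P s) β))
      (constantCoeff (PowerSeries.C β * P' * cpowSeries (P τ) (β - 1))) τ := by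
  have hP0 : HasDerivAt (fun s => constantCoeff (P s)) (constantCoeff P') τ := by
    simpa only [PowerSeries.coeff_zero_eq_constantCoeff_apply] using hP 0
  simp only [map_mul, PowerSeries.constantCoeff_C, constantCoeff_cpowSeries]
  convert! ((hasDerivAt_id _).cpow_const (c := β) hs).comp τ hP0 using 1
  simp only [id]
  ring

theorem differentiableAt_coeff_cpow (hP : HasCoeffDerivAt P P' τ)
    (hs : constantCoeff (P τ) ∈ Complex.slitPlane) (β : ℂ) (d : ℕ) :
    DifferentiableAt 𝕜 (fun s => PowerSeries.coeff d (cpowSeries (P s) β)) τ := by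
  induction d using Nat.strong_induction_on with
  | _ d ih =>
    cases d with
    | zero =>
      simpa only [PowerSeries.coeff_zero_eq_constantCoeff_apply] using
        (hP.constantCoeff_cpow hs β).differentiableAt
    | succ d =>
      have hP0 := (hP 0).differentiableAt
      simp only [PowerSeries.coeff_zero_eq_constantCoeff_apply] at hP0
      simp only [coeff_succ_cpowSeries]
      refine DifferentiableAt.fun_div (.fun_sum fun ij hij => ?_) (hP0.const_mul _)
        (mul_ne_zero d.cast_add_one_ne_zero (Complex.slitPlane_ne_zero hs))
      exact ((hP _).differentiableAt.const_mul _).mul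
        (ih _ (Nat.lt_succ_of_le (Finset.HasAntidiagonal.antidiagonal.snd_le hij)))

theorem cpow (hP : HasCoeffDerivAt P P' τ)
    (hs : constantCoeff (P τ) ∈ Complex.slitPlane) (β : ℂ) :
    HasCoeffDerivAt (fun s => cpowSeries (P s) β)
      (PowerSeries.C β * P' * cpowSeries (P τ) (β - 1)) τ := by
  set G := cpowSeries (P τ) (β - 1)
  have hP0 : constantCoeff (P τ) ≠ 0 := Complex.slitPlane_ne_zero hs
  obtain ⟨F', hF⟩ : ∃ F', HasCoeffDerivAt (fun s => cpowSeries (P s) β) F' τ :=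
    ⟨PowerSeries.mk fun d => deriv (fun s => PowerSeries.coeff d (cpowSeries (P s) β)) τ,
      fun d => by
        simpa only [PowerSeries.coeff_mk] using
          (hP.differentiableAt_coeff_cpow hs β d).hasDerivAt⟩
  have hF0 : constantCoeff F' = constantCoeff (PowerSeries.C β * P' * G) := by
    have h0 := hF 0
    simp only [PowerSeries.coeff_zero_eq_constantCoeff_apply] at h0
    exact h0.unique (hP.constantCoeff_cpow hs β)
  have hode : P' * derivative ℂ (cpowSeries (P τ) β) + P τ * derivative ℂ F' =
      PowerSeries.C β * (derivative ℂ P' * cpowSeries (P τ) β + derivative ℂ (P τ) * F') := by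
    have hne : ∀ᶠ s in 𝓝 τ, constantCoeff (P s) ≠ 0 := by
      have h0 := (hP 0).continuousAt
      simp only [PowerSeries.coeff_zero_eq_constantCoeff_apply] at h0
      exact h0.eventually_ne hP0
    refine (hP.mul hF.formalDerivative).unique
      (((hP.formalDerivative.mul hF).const_mul (PowerSeries.C β)).congr_of_eventuallyEq ?_)
    filter_upwards [hne] with s hs
    rw [mul_derivative_cpowSeries hs, mul_assoc]
  have hG := mul_derivative_cpowSeries hP0 (β - 1)
  -- The error solves the equation of `P ^ β`, so it vanishes with its constant coefficient.
  suffices F' - PowerSeries.C β * P' * G = 0 by rwa [← sub_eq_zero.1 this]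
  have h0 : constantCoeff (F' - PowerSeries.C β * P' * G) = constantCoeff (0 : ℂ⟦X⟧) := by
    rw [map_sub, hF0, sub_self, map_zero]
  refine eq_of_mul_derivative_eq hP0 (β := β) ?_ (by simp) h0
  rw [cpowSeries_eq_mul hP0 β] at hode
  rw [map_sub, map_one] at hG
  simp only [map_sub, Derivation.leibniz, PowerSeries.derivative_C, smul_eq_mul] at hode ⊢
  linear_combination hode - P' * PowerSeries.C β * hG - P' * hG

end Cpow

end HasCoeffDerivAt

end HasCoeffDerivAt

section Gegenbauer

theorem eval_gegenbauer_add_two (α x : ℝ) (d : ℕ) :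
    ((d : ℝ) + 2) * (gegenbauer α (d + 2)).eval x =
      2 * (d + 1 + α) * x * (gegenbauer α (d + 1)).eval x -
        (d + 2 * α) * (gegenbauer α d).eval x := by
  simp only [gegenbauer, Polynomial.eval_sub, Polynomial.eval_mul, Polynomial.eval_C,
    Polynomial.eval_X]
  field_simp

theorem mul_derivative_mk_gegenbauer (α x : ℝ) (c a : ℂ) :
    (1 - PowerSeries.C (2 * x * c) * PowerSeries.X + PowerSeries.C (c ^ 2) * PowerSeries.X ^ 2) *
        derivative ℂ (PowerSeries.mk fun d => a * c ^ d * ((gegenbauer α d).eval x : ℝ)) =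
      PowerSeries.C (-(α : ℂ)) * (PowerSeries.C (-(2 * x * c)) +
        PowerSeries.C (2 * c ^ 2) * PowerSeries.X) *
          PowerSeries.mk fun d => a * c ^ d * ((gegenbauer α d).eval x : ℝ) := by
  set G : ℂ⟦X⟧ := PowerSeries.mk fun d => a * c ^ d * ((gegenbauer α d).eval x : ℝ)
  suffices h : derivative ℂ G - PowerSeries.X * (PowerSeries.C (2 * x * c) * derivative ℂ G) +
      PowerSeries.X * (PowerSeries.C (c ^ 2) * (PowerSeries.X * derivative ℂ G)) =
      PowerSeries.C (2 * α * x * c) * G - PowerSeries.X * (PowerSeries.C (2 * α * c ^ 2) * G) by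
    simp only [map_neg, map_mul, map_pow] at h ⊢
    linear_combination h
  ext n
  rcases n with _ | n
  · simp only [map_add, map_sub, PowerSeries.coeff_zero_X_mul, PowerSeries.coeff_C_mul,
      PowerSeries.coeff_derivative, G, PowerSeries.coeff_mk, gegenbauer, Polynomial.eval_mul,
      Polynomial.eval_C, Polynomial.eval_X, Polynomial.eval_one]
    push_cast
    ring
  · have hrec := congrArg (fun y : ℝ => (y : ℂ)) (eval_gegenbauer_add_two α x n)
    simp only [map_add, map_sub, PowerSeries.coeff_succ_X_mul, PowerSeries.coeff_C_mul,
      coeff_X_mul_derivative, PowerSeries.coeff_derivative, G, PowerSeries.coeff_mk]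
    push_cast at hrec ⊢
    linear_combination a * c ^ (n + 2) * hrec

theorem coeff_cpowSeries_eq_gegenbauer (α x : ℝ) {w : ℂ} (hw : w ≠ 0) (c : ℂ) (d : ℕ) :
    PowerSeries.coeff d (cpowSeries (PowerSeries.C w * (1 - PowerSeries.C (2 * x * c) *
      PowerSeries.X + PowerSeries.C (c ^ 2) * PowerSeries.X ^ 2)) (-α)) =
      w ^ (-(α : ℂ)) * c ^ d * ((gegenbauer α d).eval x : ℝ) := by
  set P : ℂ⟦X⟧ := PowerSeries.C w * (1 - PowerSeries.C (2 * x * c) * PowerSeries.X +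
    PowerSeries.C (c ^ 2) * PowerSeries.X ^ 2)
  have hP : constantCoeff P = w := by simp [P]
  have hP' : derivative ℂ P = PowerSeries.C w * (PowerSeries.C (-(2 * x * c)) +
      PowerSeries.C (2 * c ^ 2) * PowerSeries.X) := by
    simp only [P, map_add, map_sub, map_neg, Derivation.leibniz, Derivation.leibniz_pow,
      Derivation.map_one_eq_zero, PowerSeries.derivative_C, PowerSeries.derivative_X, smul_eq_mul,
      nsmul_eq_mul]
    rw [map_mul PowerSeries.C 2 (c ^ 2), map_ofNat]
    ring
  have hP0 : constantCoeff P ≠ 0 := hP ▸ hw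
  rw [eq_of_mul_derivative_eq hP0 (mul_derivative_cpowSeries hP0 (-α))
    (G := PowerSeries.mk fun d => w ^ (-(α : ℂ)) * c ^ d * ((gegenbauer α d).eval x : ℝ)) ?_ ?_,
    PowerSeries.coeff_mk]
  · rw [hP']
    linear_combination
      PowerSeries.C w * mul_derivative_mk_gegenbauer α x c (w ^ (-(α : ℂ)))
  · rw [constantCoeff_cpowSeries, hP, ← PowerSeries.coeff_zero_eq_constantCoeff_apply,
      PowerSeries.coeff_mk]
    simp [gegenbauer]

end Gegenbauer

section SecondDerivative

variable {𝕜 : Type*} [NontriviallyNormedField 𝕜] [NormedAlgebra 𝕜 ℂ] {H H₁ P P₁ : 𝕜 → ℂ⟦X⟧}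
  {H₂ P₂ : ℂ⟦X⟧} {τ : 𝕜}

theorem deriv_deriv_coeff_mul_cpowSeries (hH : ∀ s, HasCoeffDerivAt H (H₁ s) s)
    (hH₁ : HasCoeffDerivAt H₁ H₂ τ) (hP : ∀ s, HasCoeffDerivAt P (P₁ s) s)
    (hP₁ : HasCoeffDerivAt P₁ P₂ τ) (hs : ∀ s, constantCoeff (P s) ∈ Complex.slitPlane)
    (β : ℂ) (d : ℕ) :
    deriv (deriv fun s => PowerSeries.coeff d (H s * cpowSeries (P s) β)) τ =
      PowerSeries.coeff d (H₂ * cpowSeries (P τ) β +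
        PowerSeries.C β * (2 * H₁ τ * P₁ τ + H τ * P₂) * cpowSeries (P τ) (β - 1) +
        PowerSeries.C (β * (β - 1)) * H τ * P₁ τ ^ 2 * cpowSeries (P τ) (β - 2)) := by
  have hfirst : deriv (fun s => PowerSeries.coeff d (H s * cpowSeries (P s) β)) = fun s =>
      PowerSeries.coeff d (H₁ s * cpowSeries (P s) β +
        H s * (PowerSeries.C β * P₁ s * cpowSeries (P s) (β - 1))) :=
    funext fun s => ((hH s).mul ((hP s).cpow (hs s) β) d).deriv
  have hsecond := (hH₁.mul ((hP τ).cpow (hs τ) β)).add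
    ((hH τ).mul ((hP₁.const_mul (PowerSeries.C β)).mul ((hP τ).cpow (hs τ) (β - 1))))
  rw [hfirst, (hsecond d).deriv, show β - 1 - 1 = β - 2 by ring]
  congr 1
  rw [map_mul]
  ring

end SecondDerivative

section MvPolynomial

theorem hasDerivAt_eval_update {𝕜 σ : Type*} [NontriviallyNormedField 𝕜] [DecidableEq σ]
    (h : MvPolynomial σ 𝕜) (x : σ → 𝕜) (i : σ) (τ : 𝕜) :
    HasDerivAt (fun s => MvPolynomial.eval (update x i s) h)
      (MvPolynomial.eval (update x i τ) (MvPolynomial.pderiv i h)) τ := by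
  induction h using MvPolynomial.induction_on with
  | C a => simpa using hasDerivAt_const τ a
  | add p q hp hq => simpa only [map_add] using hp.fun_add hq
  | mul_X p j hp =>
    have hj : HasDerivAt (fun s => update x i s j)
        (MvPolynomial.eval (update x i τ) (MvPolynomial.pderiv i (MvPolynomial.X j))) τ := by
      rcases eq_or_ne j i with rfl | hne
      · simpa only [update_self, MvPolynomial.pderiv_X_self, map_one] using hasDerivAt_id' τ
      · simpa only [update_of_ne hne, MvPolynomial.pderiv_X_of_ne hne, map_zero] using
          hasDerivAt_const τ (x j)
    simp only [map_mul, MvPolynomial.eval_X, Derivation.leibniz, map_add, smul_eq_mul]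
    convert! hp.fun_mul hj using 1
    ring

end MvPolynomial

section ShiftedForm

open Complex (I)

variable {n : ℕ}

/-- The form `‖x‖² - t²` at the point `(t + i, x)`, an imaginary time translate. -/
noncomputable def shiftedForm (z : ℝ × (Fin n → ℝ)) : ℂ :=
  (1 - I * z.1) ^ 2 + ((∑ i, z.2 i ^ 2 : ℝ) : ℂ)

/-- The form `‖x‖² - t²` at the point `(t + i c, x)` with `c = (1 - X) / (1 + X)`, cleared of
denominators by the factor `(1 + X)²`. -/
noncomputable def shiftedFormSeries (z : ℝ × (Fin n → ℝ)) : ℂ⟦X⟧ :=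
  (1 - PowerSeries.X - PowerSeries.C (I * z.1) * (1 + PowerSeries.X)) ^ 2 +
    PowerSeries.C ((∑ i, z.2 i ^ 2 : ℝ) : ℂ) * (1 + PowerSeries.X) ^ 2

theorem constantCoeff_shiftedFormSeries (z : ℝ × (Fin n → ℝ)) :
    constantCoeff (shiftedFormSeries z) = shiftedForm z := by
  simp [shiftedFormSeries, shiftedForm]

theorem shiftedForm_mem_slitPlane (z : ℝ × (Fin n → ℝ)) :
    shiftedForm z ∈ Complex.slitPlane := by
  rw [Complex.mem_slitPlane_iff, shiftedForm]
  rcases eq_or_ne z.1 0 with ht | ht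
  · left
    have hρ : 0 ≤ ∑ i, z.2 i ^ 2 := Finset.sum_nonneg fun i _ => sq_nonneg _
    rw [ht, Complex.ofReal_zero, mul_zero, sub_zero, one_pow, Complex.add_re, Complex.one_re,
      Complex.ofReal_re]
    linarith
  · right
    rw [Complex.add_im, Complex.ofReal_im]
    simp [pow_two, ht]

theorem constantCoeff_shiftedFormSeries_mem_slitPlane (z : ℝ × (Fin n → ℝ)) :
    constantCoeff (shiftedFormSeries z) ∈ Complex.slitPlane :=
  constantCoeff_shiftedFormSeries z ▸ shiftedForm_mem_slitPlane z

theorem contDiff_coeff_shiftedFormSeries {k : WithTop ℕ∞} (d : ℕ) :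
    ContDiff ℝ k fun z : ℝ × (Fin n → ℝ) => PowerSeries.coeff d (shiftedFormSeries z) := by
  have hexpand (z : ℝ × (Fin n → ℝ)) : shiftedFormSeries z = (1 - PowerSeries.X) ^ 2 -
      PowerSeries.C (2 * (I * z.1)) * (1 - PowerSeries.X ^ 2) +
      PowerSeries.C (((∑ i, z.2 i ^ 2 - z.1 ^ 2 : ℝ)) : ℂ) * (1 + PowerSeries.X) ^ 2 := by
    have hI : PowerSeries.C (I * z.1) ^ 2 = -PowerSeries.C ((z.1 : ℂ) ^ 2) := by
      rw [← map_pow, mul_pow, Complex.I_sq, neg_one_mul, map_neg]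
    rw [shiftedFormSeries, map_mul _ 2, map_ofNat, Complex.ofReal_sub, map_sub,
      Complex.ofReal_pow z.1]
    linear_combination (1 + PowerSeries.X) ^ 2 * hI
  simp only [hexpand, map_add, map_sub, PowerSeries.coeff_C_mul]
  have hofReal : ContDiff ℝ k ((↑) : ℝ → ℂ) := Complex.ofRealCLM.contDiff
  fun_prop

theorem hasCoeffDerivAt_one_sub_X_sub_C_mul (t : ℝ) :
    HasCoeffDerivAt (fun s : ℝ => 1 - PowerSeries.X - PowerSeries.C (I * s) * (1 + PowerSeries.X))
      (-(PowerSeries.C I * (1 + PowerSeries.X))) t := by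
  have hI : HasDerivAt (fun s : ℝ => I * s) I t := by
    simpa only [Complex.ofReal_one, mul_one] using (hasDerivAt_id' t).ofReal_comp.const_mul I
  exact (HasCoeffDerivAt.C_mul hI _).const_sub _

theorem hasCoeffDerivAt_shiftedFormSeries_time (t : ℝ) (x : Fin n → ℝ) :
    HasCoeffDerivAt (fun s => shiftedFormSeries (s, x))
      (PowerSeries.C (-2 * I) * (1 + PowerSeries.X) *
        (1 - PowerSeries.X - PowerSeries.C (I * t) * (1 + PowerSeries.X))) t := by
  have hroot := hasCoeffDerivAt_one_sub_X_sub_C_mul t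
  have h := (hroot.mul hroot).add
    (.const (PowerSeries.C ((∑ i, x i ^ 2 : ℝ) : ℂ) * (1 + PowerSeries.X) ^ 2) t)
  simp only [shiftedFormSeries, pow_two] at h ⊢
  convert! h using 1
  rw [map_mul _ (-2), map_neg, map_ofNat]
  ring

theorem hasCoeffDerivAt_shiftedFormSeries_update (t : ℝ) (x : Fin n → ℝ) (i : Fin n) (τ : ℝ) :
    HasCoeffDerivAt (fun s => shiftedFormSeries (t, update x i s))
      (PowerSeries.C (2 * τ : ℂ) * (1 + PowerSeries.X) ^ 2) τ := by
  have hρ : HasDerivAt (fun s => ∑ j, update x i s j ^ 2) (2 * τ) τ := by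
    simpa [Pi.single_apply] using HasDerivAt.fun_sum (u := Finset.univ) fun j _ =>
      (hasDerivAt_pi.1 (hasDerivAt_update x i τ) j).fun_pow 2
  have h := (HasCoeffDerivAt.const ((1 - PowerSeries.X -
    PowerSeries.C (I * t) * (1 + PowerSeries.X)) ^ 2) τ).add
      (.C_mul hρ.ofReal_comp ((1 + PowerSeries.X) ^ 2))
  simpa only [shiftedFormSeries, zero_add, Complex.ofReal_mul, Complex.ofReal_ofNat] using h

end ShiftedForm

section WaveOperator

open Complex (I)

variable {n : ℕ}

theorem pt_pt_coeff_mul_cpowSeries_shiftedFormSeries (g : (Fin n → ℝ) → ℂ) (β : ℂ) (d : ℕ)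
    (z : ℝ × (Fin n → ℝ)) :
    pt (pt fun y => PowerSeries.coeff d
        (PowerSeries.C (g y.2) * cpowSeries (shiftedFormSeries y) β)) z =
      PowerSeries.coeff d (
        PowerSeries.C (-2 * β * g z.2) * ((1 + PowerSeries.X) ^ 2 *
          cpowSeries (shiftedFormSeries z) (β - 1)) +
        PowerSeries.C (-4 * β * (β - 1) * g z.2) * ((1 + PowerSeries.X) ^ 2 *
          (1 - PowerSeries.X - PowerSeries.C (I * z.1) * (1 + PowerSeries.X)) ^ 2 *
          cpowSeries (shiftedFormSeries z) (β - 2))) := by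
  obtain ⟨t, x⟩ := z
  have hP₁ := (hasCoeffDerivAt_one_sub_X_sub_C_mul t).const_mul
    (PowerSeries.C (-2 * I) * (1 + PowerSeries.X))
  refine (deriv_deriv_coeff_mul_cpowSeries (fun s => .const (PowerSeries.C (g x)) s) (.const 0 t)
    (hasCoeffDerivAt_shiftedFormSeries_time · x) hP₁
    (fun s => constantCoeff_shiftedFormSeries_mem_slitPlane (s, x)) β d).trans ?_
  have hI : (PowerSeries.C I : ℂ⟦X⟧) ^ 2 = -1 := by rw [← map_pow, Complex.I_sq, map_neg, map_one]
  congr 1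
  simp only [map_mul, map_neg, map_ofNat]
  generalize 1 - PowerSeries.X - PowerSeries.C I * PowerSeries.C (t : ℂ) * (1 + PowerSeries.X) = T
  linear_combination PowerSeries.C β * PowerSeries.C (g x) * (1 + PowerSeries.X) ^ 2 *
    (2 * cpowSeries (shiftedFormSeries (t, x)) (β - 1) +
      4 * PowerSeries.C (β - 1) * T ^ 2 * cpowSeries (shiftedFormSeries (t, x)) (β - 2)) * hI

theorem px_px_coeff_mul_cpowSeries_shiftedFormSeries (h : MvPolynomial (Fin n) ℝ) (β : ℂ) (d : ℕ)
    (i : Fin n) (z : ℝ × (Fin n → ℝ)) :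
    px i (px i fun y => PowerSeries.coeff d
        (PowerSeries.C (MvPolynomial.eval y.2 h : ℂ) * cpowSeries (shiftedFormSeries y) β)) z =
      PowerSeries.coeff d (
        PowerSeries.C
            (MvPolynomial.eval z.2 (MvPolynomial.pderiv i (MvPolynomial.pderiv i h)) : ℂ) *
          cpowSeries (shiftedFormSeries z) β +
        PowerSeries.C (4 * β * (z.2 i * MvPolynomial.eval z.2 (MvPolynomial.pderiv i h) : ℝ) +
            2 * β * (MvPolynomial.eval z.2 h : ℝ)) *
          ((1 + PowerSeries.X) ^ 2 * cpowSeries (shiftedFormSeries z) (β - 1)) +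
        PowerSeries.C (4 * β * (β - 1) * (MvPolynomial.eval z.2 h : ℝ) * (z.2 i ^ 2 : ℝ)) *
          ((1 + PowerSeries.X) ^ 4 * cpowSeries (shiftedFormSeries z) (β - 2))) := by
  obtain ⟨t, x⟩ := z
  have hpx : px i (px i fun y => PowerSeries.coeff d
        (PowerSeries.C (MvPolynomial.eval y.2 h : ℂ) * cpowSeries (shiftedFormSeries y) β)) (t, x) =
      deriv (deriv fun s => PowerSeries.coeff d (PowerSeries.C
        (MvPolynomial.eval (update x i s) h : ℂ) *
          cpowSeries (shiftedFormSeries (t, update x i s)) β)) (x i) := by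
    simp only [px, update_idem, update_self]
  have hH (g : MvPolynomial (Fin n) ℝ) (s : ℝ) := HasCoeffDerivAt.C
    (hasDerivAt_eval_update g x i s).ofReal_comp
  have hP₁ : HasCoeffDerivAt (fun s : ℝ => PowerSeries.C (2 * s : ℂ) * (1 + PowerSeries.X) ^ 2)
      (PowerSeries.C 2 * (1 + PowerSeries.X) ^ 2) (x i) :=
    .C_mul (by simpa using (hasDerivAt_id' (x i)).ofReal_comp.const_mul (2 : ℂ)) _
  rw [hpx, deriv_deriv_coeff_mul_cpowSeries (hH h) (hH _ (x i))
    (hasCoeffDerivAt_shiftedFormSeries_update t x i) hP₁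
    (fun s => constantCoeff_shiftedFormSeries_mem_slitPlane (t, update x i s)) β d,
    update_eq_self]
  congr 1
  simp only [map_mul, map_add, map_ofNat, Complex.ofReal_mul, Complex.ofReal_pow, map_pow]
  ring

theorem box_coeff_mul_cpowSeries_shiftedFormSeries {h : MvPolynomial (Fin n) ℝ} {l : ℕ}
    (hhom : h.IsHomogeneous l)
    (hharm : ∑ i, MvPolynomial.pderiv i (MvPolynomial.pderiv i h) = 0) {β : ℂ}
    (hβ : β = (1 - n) / 2 - l) (d : ℕ) (z : ℝ × (Fin n → ℝ)) :
    Box n (fun y => PowerSeries.coeff d (PowerSeries.C (MvPolynomial.eval y.2 h : ℂ) *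
      cpowSeries (shiftedFormSeries y) β)) z = 0 := by
  have heuler : ∑ i, z.2 i * MvPolynomial.eval z.2 (MvPolynomial.pderiv i h) =
      l * MvPolynomial.eval z.2 h := by
    simpa using congrArg (MvPolynomial.eval z.2) hhom.sum_X_mul_pderiv
  have hlaplace : ∑ i, MvPolynomial.eval z.2
      (MvPolynomial.pderiv i (MvPolynomial.pderiv i h)) = 0 := by
    rw [← map_sum, hharm, map_zero]
  have hpow : cpowSeries (shiftedFormSeries z) (β - 1) =
      shiftedFormSeries z * cpowSeries (shiftedFormSeries z) (β - 2) := by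
    rw [cpowSeries_eq_mul (Complex.slitPlane_ne_zero
      (constantCoeff_shiftedFormSeries_mem_slitPlane z)), show β - 1 - 1 = β - 2 by ring]
  simp only [Box, pt_pt_coeff_mul_cpowSeries_shiftedFormSeries
    (fun x => (MvPolynomial.eval x h : ℂ)), px_px_coeff_mul_cpowSeries_shiftedFormSeries]
  rw [← map_sum, ← map_neg, ← map_add]
  refine (congrArg _ ?_).trans (map_zero (PowerSeries.coeff d))
  have hC : PowerSeries.C (4 * β * (l * MvPolynomial.eval z.2 h : ℝ) +
      n * 2 * β * (MvPolynomial.eval z.2 h : ℝ)) =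
      PowerSeries.C (2 * β * (1 - 2 * β) * (MvPolynomial.eval z.2 h : ℝ)) := by
    rw [hβ]
    push_cast
    ring_nf
  simp only [Finset.sum_add_distrib, ← Finset.sum_mul, ← map_sum, ← Finset.mul_sum,
    ← Complex.ofReal_sum, heuler, hlaplace, Finset.sum_const, Finset.card_univ, Fintype.card_fin,
    nsmul_eq_mul, Complex.ofReal_zero, ← mul_assoc]
  rw [hC, hpow, map_zero]
  have hP : shiftedFormSeries z = (1 - PowerSeries.X - PowerSeries.C (I * z.1) *
    (1 + PowerSeries.X)) ^ 2 + PowerSeries.C ((∑ i, z.2 i ^ 2 : ℝ) : ℂ) *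
      (1 + PowerSeries.X) ^ 2 := rfl
  generalize cpowSeries (shiftedFormSeries z) (β - 2) = S
  generalize 1 - PowerSeries.X - PowerSeries.C (I * z.1) * (1 + PowerSeries.X) = T at hP ⊢
  simp only [map_mul, map_neg, map_ofNat, map_sub, map_one, hP]
  ring

end WaveOperator

section BasisFunction

variable {n : ℕ}

theorem norm_shiftedForm (z : ℝ × (Fin n → ℝ)) : ‖shiftedForm z‖ = lamfun z.1 z.2 := by
  rw [Complex.norm_def, lamfun, Complex.normSq_apply, shiftedForm, qfun]
  congr 1
  simp only [pow_two, Complex.add_re, Complex.add_im, Complex.mul_re, Complex.mul_im,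
    Complex.sub_re, Complex.sub_im, Complex.one_re, Complex.one_im, Complex.I_re, Complex.I_im,
    Complex.ofReal_re, Complex.ofReal_im]
  ring

theorem shiftedFormSeries_eq_quadratic (z : ℝ × (Fin n → ℝ)) :
    shiftedFormSeries z = PowerSeries.C (shiftedForm z) -
      PowerSeries.C (2 * (1 - qfun z.1 z.2 : ℝ) : ℂ) * PowerSeries.X +
        PowerSeries.C (starRingEnd ℂ (shiftedForm z)) * PowerSeries.X ^ 2 := by
  have hI : PowerSeries.C Complex.I ^ 2 = (-1 : ℂ⟦X⟧) := by
    rw [← map_pow, Complex.I_sq, map_neg, map_one]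
  simp only [shiftedFormSeries, shiftedForm, qfun, Complex.ofReal_sub, Complex.ofReal_add,
    Complex.ofReal_neg, Complex.ofReal_pow, Complex.ofReal_one, map_add, map_sub, map_mul, map_pow,
    map_one, map_neg, map_ofNat, Complex.conj_I, Complex.conj_ofReal]
  linear_combination 2 * PowerSeries.C (z.1 : ℂ) ^ 2 * PowerSeries.X * hI

theorem shiftedFormSeries_eq_C_mul (z : ℝ × (Fin n → ℝ)) :
    shiftedFormSeries z = PowerSeries.C (shiftedForm z) *
      (1 - PowerSeries.C (2 * ((1 - qfun z.1 z.2) / lamfun z.1 z.2 : ℝ) *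
        (lamfun z.1 z.2 / shiftedForm z) : ℂ) * PowerSeries.X +
          PowerSeries.C ((lamfun z.1 z.2 / shiftedForm z : ℂ) ^ 2) * PowerSeries.X ^ 2) := by
  have hw : shiftedForm z ≠ 0 := Complex.slitPlane_ne_zero (shiftedForm_mem_slitPlane z)
  have hlam : (lamfun z.1 z.2 : ℂ) ≠ 0 := by
    rw [← norm_shiftedForm, Complex.ofReal_ne_zero]
    exact norm_ne_zero_iff.2 hw
  have hlinear : shiftedForm z * (2 * ((1 - qfun z.1 z.2) / lamfun z.1 z.2 : ℝ) *
      (lamfun z.1 z.2 / shiftedForm z)) = 2 * (1 - qfun z.1 z.2 : ℝ) := by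
    rw [Complex.ofReal_div]
    field_simp
  have hquadratic : shiftedForm z * (lamfun z.1 z.2 / shiftedForm z) ^ 2 =
      starRingEnd ℂ (shiftedForm z) := by
    rw [← norm_shiftedForm, div_pow, ← Complex.mul_conj']
    field_simp
  rw [shiftedFormSeries_eq_quadratic, mul_add, mul_sub, mul_one, ← mul_assoc, ← mul_assoc,
    ← map_mul, ← map_mul, hlinear, hquadratic]

theorem coeff_cpowSeries_shiftedFormSeries_eq_gpl (r : ℝ) (l d : ℕ) (z : ℝ × (Fin n → ℝ)) :
    PowerSeries.coeff d (cpowSeries (shiftedFormSeries z) (r - l)) =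
      gpl r l d z.1 z.2 * shiftedForm z ^ (r - l - d : ℂ) := by
  have hw : shiftedForm z ≠ 0 := Complex.slitPlane_ne_zero (shiftedForm_mem_slitPlane z)
  rw [shiftedFormSeries_eq_C_mul, show (r - l : ℂ) = -((l - r : ℝ) : ℂ) by push_cast; ring,
    coeff_cpowSeries_eq_gegenbauer _ _ hw, gpl, Complex.cpow_sub _ _ hw, Complex.cpow_natCast]
  push_cast
  ring

end BasisFunction

open MvPolynomial in
/-- With `r = (1-n)/2`, `h` a real harmonic polynomial on `ℝⁿ` homogeneous of degree `l`,
and `p = 2(l+d-r) = 2l+2d+n-1`, the function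
`f(t,x) = g_{p,l}(t,x)·h(x)·((1-it)²+‖x‖²)^{-p/2}` is smooth and solves `□f = 0`. -/
theorem basis_functions_solve_wave_equation (n : ℕ) (hn : 2 ≤ n) (r : ℝ)
    (hr : r = (1 - (n : ℝ)) / 2) (l d : ℕ)
    (h : MvPolynomial (Fin n) ℝ) (hhom : h.IsHomogeneous l)
    (hharm : ∑ i : Fin n, pderiv i (pderiv i h) = 0)
    (p : ℕ) (hp : p = 2 * l + 2 * d + n - 1) :
    let f : ℝ × (Fin n → ℝ) → ℂ := fun z =>
      ((gpl r l d z.1 z.2 : ℝ) : ℂ) * ((eval z.2 h : ℝ) : ℂ) *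
        ((1 - Complex.I * z.1) ^ 2 + ((∑ i, (z.2 i) ^ 2 : ℝ) : ℂ)) ^ (-((p : ℂ) / 2))
    ContDiff ℝ (⊤ : ℕ∞) f ∧ ∀ z, Box n f z = 0 := by
  intro f
  have hβ : (r - l : ℂ) = (1 - n) / 2 - l := by
    rw [hr]
    push_cast
    rfl
  have hexp : (r - l - d : ℂ) = -((p : ℂ) / 2) := by
    have hp' : (p : ℂ) + 1 = 2 * l + 2 * d + n := by
      exact_mod_cast (show p + 1 = 2 * l + 2 * d + n by omega)
    linear_combination hβ + hp' / 2
  have hf : f = fun z => PowerSeries.coeff d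
      (PowerSeries.C ((eval z.2 h : ℝ) : ℂ) * cpowSeries (shiftedFormSeries z) (r - l)) := by
    funext z
    rw [PowerSeries.coeff_C_mul, coeff_cpowSeries_shiftedFormSeries_eq_gpl, hexp,
      mul_left_comm, ← mul_assoc, shiftedForm]
  rw [hf]
  refine ⟨?_, box_coeff_mul_cpowSeries_shiftedFormSeries hhom hharm hβ d⟩
  simp only [PowerSeries.coeff_C_mul]
  have hh : ContDiff ℝ (⊤ : ℕ∞) fun x : Fin n → ℝ => eval x h :=
    (AnalyticOnNhd.eval_mvPolynomial h).contDiff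
  exact (Complex.ofRealCLM.contDiff.comp (hh.comp contDiff_snd)).mul
    (contDiff_coeff_cpowSeries contDiff_coeff_shiftedFormSeries
      constantCoeff_shiftedFormSeries_mem_slitPlane _ d)
end

section
/- Let k ≥ 0 and suppose g is a polynomial and h_l a spherical harmonic of degree l on S^{n-1} with 0 ≤ l ≤ k. The function (cos θ, x̂ sin θ) ↦ g(cos θ) sin^l θ · h_l(x̂) on Sⁿ lies in H_k(Sⁿ) (i.e. is the restriction of a degree-k harmonic homogeneous polynomial on ℝ^{n+1}) if and only if g satisfies (1-s²)g''(s) - (2(l-r)+1)s g'(s) + d(2(l-r)+d)g(s) = 0, where r = (1-n)/2 and d = k-l. -/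
open Polynomial MvPolynomial

/-!
With `|x|²` the power sum `psum _ _ 2`, the separated function given by `g` and `h` extends to the
polynomial `F_D(g) = |x| ^ D * g (x₀ / |x|) * h (x₁, …, xₙ)` whenever the exponents in `g` are at
most `D` and of the parity of `D`. Then `|x|² * Δ (F_D(g)) = F_D(L_D g)`, where `L_D` is the
Gegenbauer operator with parameter `D`, so the equation `L_d g = 0` gives a harmonic extension of
degree `l + d`; the recurrence for the coefficients of a solution bounds its degree by `d` and fixes
its parity.

Conversely, the antipodal symmetry of a homogeneous extension `P` forces `g` to have the parity of
`d`, but its degree is not yet known to be at most `d`. For large `N` uniqueness of homogeneous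
extensions gives `|x| ^ (2 * N) * P = F_D(g)` with `D = d + 2 * N`. If `P` is harmonic, the left
side is an eigenvector of `|x|² * Δ` with eigenvalue the scalar `L_D - L_d`, hence `F_D(L_d g) = 0`
and `L_d g = 0`.
-/

lemma pderiv_rename_of_notMem_range {σ τ R : Type*} [CommSemiring R] {f : σ → τ} {j : τ}
    (hj : j ∉ Set.range f) (p : MvPolynomial σ R) : pderiv j (rename f p) = 0 := by
  classical
  refine pderiv_eq_zero_of_notMem_vars fun hmem ↦ hj ?_
  obtain ⟨i, -, hi⟩ := Finset.mem_image.mp (vars_rename f p hmem)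
  exact ⟨i, hi⟩

section Laplacian

variable {σ τ R : Type*} [Fintype σ] [Fintype τ] [CommSemiring R]

/-- The Laplacian `∑ i, ∂²/∂xᵢ²` on polynomials. -/
noncomputable def laplacian : MvPolynomial σ R →ₗ[R] MvPolynomial σ R where
  toFun f := ∑ i, pderiv i (pderiv i f)
  map_add' f g := by simp only [map_add, Finset.sum_add_distrib]
  map_smul' a f := by simp only [Derivation.map_smul, Finset.smul_sum, RingHom.id_apply]

lemma laplacian_apply (f : MvPolynomial σ R) : laplacian f = ∑ i, pderiv i (pderiv i f) := rfl

lemma laplacian_mul (f g : MvPolynomial σ R) :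
    laplacian (f * g) =
      laplacian f * g + 2 * ∑ i, pderiv i f * pderiv i g + f * laplacian g := by
  simp only [laplacian_apply, Finset.sum_mul, Finset.mul_sum, ← Finset.sum_add_distrib]
  refine Finset.sum_congr rfl fun i _ ↦ ?_
  simp only [pderiv_mul, map_add]
  ring

lemma laplacian_rename {f : σ → τ} (hf : Function.Injective f) (p : MvPolynomial σ R) :
    laplacian (rename f p) = rename f (laplacian p) := by
  simp only [laplacian_apply, map_sum, ← pderiv_rename hf]
  refine (Fintype.sum_of_injective f hf _ _ (fun j hj ↦ ?_) fun _ ↦ rfl).symm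
  rw [pderiv_rename_of_notMem_range hj, map_zero]

lemma pderiv_psum_two (i : σ) : pderiv i (psum σ R 2) = (2 : R) • X i := by
  classical
  simp [psum, pderiv_X, Pi.single_apply, MvPolynomial.smul_eq_C_mul, map_ofNat]

lemma laplacian_psum_two : laplacian (psum σ R 2) = (2 * Fintype.card σ : R) • 1 := by
  simp [laplacian_apply, pderiv_psum_two, MvPolynomial.smul_eq_C_mul, mul_comm]

lemma psum_two_ne_zero [Nonempty σ] [Nontrivial R] : psum σ R 2 ≠ 0 := by
  classical
  intro hzero
  have := congrArg (MvPolynomial.eval (Pi.single (Classical.arbitrary σ) 1)) hzero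
  simp [psum, Pi.single_apply, ite_pow] at this

lemma isHomogeneous_psum (m : ℕ) : (psum σ R m).IsHomogeneous m :=
  IsHomogeneous.sum _ _ _ fun i _ ↦ isHomogeneous_X_pow i m

lemma laplacian_psum_two_mul {e : ℕ} {f : MvPolynomial σ R} (hf : f.IsHomogeneous e) :
    laplacian (psum σ R 2 * f) =
      psum σ R 2 * laplacian f + (4 * e + 2 * Fintype.card σ : R) • f := by
  have euler : ∑ i, pderiv i (psum σ R 2) * pderiv i f = (2 : R) • e • f := by
    simp only [pderiv_psum_two, smul_mul_assoc, ← Finset.smul_sum, hf.sum_X_mul_pderiv]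
  rw [laplacian_mul, euler, laplacian_psum_two]
  simp only [MvPolynomial.smul_eq_C_mul, nsmul_eq_mul, map_add, map_mul, map_natCast, map_ofNat]
  ring

end Laplacian

section LaplacianPow

variable {σ R : Type*} [Fintype σ] [CommRing R]

lemma laplacian_X_pow (i : σ) (j : ℕ) :
    laplacian (X i ^ j : MvPolynomial σ R) = ((j : R) * (j - 1)) • X i ^ (j - 2) := by
  have pderiv_X_pow (m : ℕ) : pderiv i (X i ^ m : MvPolynomial σ R) = (m : R) • X i ^ (m - 1) := by
    simp [MvPolynomial.smul_eq_C_mul]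
  rw [laplacian_apply, Finset.sum_eq_single i _ (by simp)]
  · rw [pderiv_X_pow, Derivation.map_smul, pderiv_X_pow, smul_smul, Nat.sub_sub]
    cases j <;> simp
  · intro k _ hk
    rw [pderiv_pow, pderiv_X_of_ne hk.symm, mul_zero, map_zero]

lemma psum_two_mul_laplacian_psum_two_pow_mul {e : ℕ} {f : MvPolynomial σ R}
    (hf : f.IsHomogeneous e) (N : ℕ) :
    psum σ R 2 * laplacian (psum σ R 2 ^ N * f) =
      psum σ R 2 ^ (N + 1) * laplacian f +
        (2 * N * (2 * N + 2 * e + Fintype.card σ - 2) : R) • (psum σ R 2 ^ N * f) := by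
  induction N with
  | zero => simp
  | succ N ih =>
    rw [pow_succ' _ N, mul_assoc, laplacian_psum_two_mul (((isHomogeneous_psum 2).pow N).mul hf),
      ih]
    simp only [MvPolynomial.smul_eq_C_mul, map_add, map_sub, map_mul, map_natCast, map_ofNat,
      map_one, Nat.cast_add, Nat.cast_mul, Nat.cast_ofNat, Nat.cast_one]
    ring

lemma laplacian_X_zero_pow_mul_rename_succ {n : ℕ} {h : MvPolynomial (Fin n) R}
    (hharm : laplacian h = 0) (j : ℕ) :
    laplacian (X 0 ^ j * rename Fin.succ h) =
      ((j : R) * (j - 1)) • (X 0 ^ (j - 2) * rename Fin.succ h) := by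
  have gradients_orthogonal : ∑ i, pderiv i (X 0 ^ j) * pderiv i (rename Fin.succ h) = 0 := by
    rw [Fin.sum_univ_succ, pderiv_rename_of_notMem_range (by simp), mul_zero, zero_add]
    refine Finset.sum_eq_zero fun i _ ↦ ?_
    rw [pderiv_pow, pderiv_X_of_ne i.succ_ne_zero.symm, mul_zero, zero_mul]
  rw [laplacian_mul, laplacian_X_pow, gradients_orthogonal,
    laplacian_rename (Fin.succ_injective n), hharm, map_zero, mul_zero, mul_zero, add_zero,
    add_zero, smul_mul_assoc]

end LaplacianPow

section Gegenbauer

variable {R : Type*} [CommRing R]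

/-- The Gegenbauer differential operator `(1-s²)g'' - (c+1)sg' + d(c+d)g`. -/
noncomputable def gegenbauerOperator (c d : R) : R[X] →ₗ[R] R[X] where
  toFun g := (1 - Polynomial.X ^ 2) * derivative (derivative g)
    - Polynomial.C (c + 1) * Polynomial.X * derivative g + Polynomial.C (d * (c + d)) * g
  map_add' f g := by simp only [derivative_add]; ring
  map_smul' a g := by
    simp only [derivative_smul, RingHom.id_apply]
    simp only [Polynomial.smul_eq_C_mul]; ring

lemma gegenbauerOperator_apply (c d : R) (g : R[X]) :
    gegenbauerOperator c d g = (1 - Polynomial.X ^ 2) * derivative (derivative g)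
      - Polynomial.C (c + 1) * Polynomial.X * derivative g + Polynomial.C (d * (c + d)) * g := rfl

lemma gegenbauerOperator_eq_add_smul (c d d' : R) (g : R[X]) :
    gegenbauerOperator c d' g =
      gegenbauerOperator c d g + ((d' - d) * (c + d + d')) • g := by
  simp only [gegenbauerOperator_apply, Polynomial.smul_eq_C_mul, map_add, map_sub, map_mul]
  ring

lemma X_sq_mul_derivative_derivative (g : R[X]) :
    Polynomial.X ^ 2 * derivative (derivative g) =
      Polynomial.X * derivative (Polynomial.X * derivative g) - Polynomial.X * derivative g := by
  rw [derivative_mul, derivative_X]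
  ring

lemma gegenbauerOperator_monomial (c d : R) (j : ℕ) (a : R) :
    gegenbauerOperator c d (Polynomial.monomial j a) =
      Polynomial.monomial (j - 2) (j * (j - 1) * a) +
        Polynomial.monomial j ((d - j) * (d + j + c) * a) := by
  have second_derivative : derivative (derivative (Polynomial.monomial j a)) =
      Polynomial.monomial (j - 2) (j * (j - 1) * a) := by
    rw [derivative_monomial, derivative_monomial, Nat.sub_sub]
    cases j <;> simp [mul_comm, mul_left_comm]
  have euler (b : R) : Polynomial.X * derivative (Polynomial.monomial j b) =
      Polynomial.monomial j (j * b) := by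
    cases j <;> simp [mul_comm]
  rw [gegenbauerOperator_apply, sub_mul, one_mul, X_sq_mul_derivative_derivative, mul_assoc]
  simp only [euler, second_derivative, Polynomial.C_mul_monomial]
  rw [show (d - j) * (d + j + c) * a =
    -(j * (j * a) - j * a) - (c + 1) * (j * a) + d * (c + d) * a by ring]
  simp only [map_add, map_sub, map_neg]
  abel

lemma coeff_gegenbauerOperator (c d : R) (g : R[X]) (j : ℕ) :
    (gegenbauerOperator c d g).coeff j =
      (j + 2) * (j + 1) * g.coeff (j + 2) + (d - j) * (d + j + c) * g.coeff j := by
  have coeff_X_mul_derivative (f : R[X]) :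
      (Polynomial.X * derivative f).coeff j = j * f.coeff j := by
    cases j <;> simp [Polynomial.coeff_derivative, mul_comm]
  rw [gegenbauerOperator_apply, sub_mul, one_mul, X_sq_mul_derivative_derivative, mul_assoc]
  simp only [Polynomial.coeff_add, Polynomial.coeff_sub, Polynomial.coeff_C_mul,
    coeff_X_mul_derivative, Polynomial.coeff_derivative]
  push_cast
  ring

end Gegenbauer

section RadialHomogenization

/-- The polynomials `g` for which `|x| ^ D * g (x₀ / |x|)` is again a polynomial in `x`: all
exponents occurring in `g` are at most `D` and congruent to `D` modulo `2`. -/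
def IsRadiallyHomogenizable {R : Type*} [Semiring R] (g : R[X]) (D : ℕ) : Prop :=
  ∀ j ∈ g.support, ∃ i, j + 2 * i = D

lemma coeff_add_two_ne_zero_of_gegenbauerOperator_eq_zero {R : Type*} [CommRing R] [LinearOrder R]
    [IsStrictOrderedRing R] {c : R} (hc : 0 ≤ c) {d j : ℕ} {g : R[X]}
    (hg : gegenbauerOperator c d g = 0) (hj : g.coeff j ≠ 0) (hjd : j ≠ d) :
    g.coeff (j + 2) ≠ 0 := by
  intro hzero
  have recurrence : ((d : R) - j) * (d + j + c) * g.coeff j = 0 := by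
    simpa [hg, hzero] using (coeff_gegenbauerOperator c d g j).symm
  have first_factor : (d : R) - j ≠ 0 := sub_ne_zero.mpr (Nat.cast_injective.ne hjd.symm)
  have second_factor : (d : R) + j + c ≠ 0 := by
    have : (0 : R) < d + j := mod_cast (by omega : 0 < d + j)
    exact (add_pos_of_pos_of_nonneg this hc).ne'
  exact mul_ne_zero (mul_ne_zero first_factor second_factor) hj recurrence

lemma isRadiallyHomogenizable_of_gegenbauerOperator_eq_zero {R : Type*} [CommRing R]
    [LinearOrder R] [IsStrictOrderedRing R] {c : R} (hc : 0 ≤ c) {d : ℕ} {g : R[X]}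
    (hg : gegenbauerOperator c d g = 0) : IsRadiallyHomogenizable g d := by
  intro j hj
  by_contra! hne
  have coeff_ne_zero (i : ℕ) : g.coeff (j + 2 * i) ≠ 0 := by
    induction i with
    | zero => simpa using hj
    | succ i ih => exact coeff_add_two_ne_zero_of_gegenbauerOperator_eq_zero hc hg ih (hne i)
  refine coeff_ne_zero (g.natDegree + 1) (Polynomial.coeff_eq_zero_of_natDegree_lt ?_)
  omega

lemma isRadiallyHomogenizable_of_comp_neg_X_eq {R : Type*} [CommRing R] [NoZeroDivisors R]
    [NeZero (2 : R)] {d : ℕ} {g : R[X]} (hg : g.comp (-Polynomial.X) = (-1 : R) ^ d • g) :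
    IsRadiallyHomogenizable g (d + 2 * g.natDegree) := by
  intro j hj
  have sign_eq : (-1 : R) ^ j = (-1) ^ d := by
    refine mul_left_cancel₀ (Polynomial.mem_support_iff.mp hj) ?_
    rw [← Polynomial.comp_C_mul_X_coeff, map_neg, map_one, neg_one_mul, hg, Polynomial.coeff_smul,
      smul_eq_mul, mul_comm]
  have neg_one_ne_one : (-1 : R) ≠ 1 := fun h ↦ two_ne_zero (α := R) (by linear_combination -h)
  have even_add : Even (j + d) := by
    have : Nontrivial R := ⟨_, _, neg_one_ne_one⟩
    rw [← neg_one_pow_eq_one_iff_even neg_one_ne_one, pow_add, sign_eq, ← mul_pow]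
    simp
  have le_natDegree := Polynomial.le_natDegree_of_mem_supp j hj
  obtain ⟨m, hm⟩ := even_add
  exact ⟨d + g.natDegree - m, by omega⟩

end RadialHomogenization

section SeparatedExtension

variable {R : Type*} [CommRing R]

/-- The extension `|x| ^ D * g (x₀ / |x|) * h (x₁, …, xₙ)` of the separated function given by `g`
and `h`. Its radial exponents `(D - j) / 2` are the intended ones when
`IsRadiallyHomogenizable g D`; otherwise they are rounded down. -/
noncomputable def separatedExtension {n : ℕ} (h : MvPolynomial (Fin n) R) (D : ℕ) :
    R[X] →ₗ[R] MvPolynomial (Fin (n + 1)) R :=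
  Polynomial.lsum fun j ↦ LinearMap.toSpanSingleton R _
    (psum (Fin (n + 1)) R 2 ^ ((D - j) / 2) * (X 0 ^ j * rename Fin.succ h))

variable {n l : ℕ} {h : MvPolynomial (Fin n) R}

lemma separatedExtension_monomial (D j : ℕ) (a : R) :
    separatedExtension h D (Polynomial.monomial j a) =
      a • (psum (Fin (n + 1)) R 2 ^ ((D - j) / 2) * (X 0 ^ j * rename Fin.succ h)) := by
  simp [separatedExtension, Polynomial.sum_monomial_index]

lemma isHomogeneous_X_zero_pow_mul_rename_succ (hhom : h.IsHomogeneous l) (j : ℕ) :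
    (X 0 ^ j * rename Fin.succ h : MvPolynomial (Fin (n + 1)) R).IsHomogeneous (j + l) :=
  (isHomogeneous_X_pow 0 j).mul hhom.rename_isHomogeneous

lemma isHomogeneous_separatedExtension (hhom : h.IsHomogeneous l) {g : R[X]} {D : ℕ}
    (hg : IsRadiallyHomogenizable g D) : (separatedExtension h D g).IsHomogeneous (l + D) := by
  rw [g.as_sum_support, map_sum]
  refine IsHomogeneous.sum _ _ _ fun j hj ↦ ?_
  obtain ⟨i, rfl⟩ := hg j hj
  rw [separatedExtension_monomial, MvPolynomial.smul_eq_C_mul]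
  refine IsHomogeneous.C_mul ?_ _
  convert ((isHomogeneous_psum 2).pow _).mul (isHomogeneous_X_zero_pow_mul_rename_succ hhom j)
    using 1
  omega

lemma psum_two_mul_laplacian_separatedExtension_monomial (hhom : h.IsHomogeneous l)
    (hharm : laplacian h = 0) (i j : ℕ) (a : R) :
    psum (Fin (n + 1)) R 2 *
        laplacian (separatedExtension h (j + 2 * i) (Polynomial.monomial j a)) =
      separatedExtension h (j + 2 * i)
        (gegenbauerOperator (2 * l + n - 1 : R) (j + 2 * i : ℕ) (Polynomial.monomial j a)) := by
  have half_sub : (j + 2 * i - j) / 2 = i := by omega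
  have lower_term : separatedExtension h (j + 2 * i)
      (Polynomial.monomial (j - 2) (j * (j - 1) * a)) = (j * (j - 1) * a : R) •
        (psum (Fin (n + 1)) R 2 ^ (i + 1) * (X 0 ^ (j - 2) * rename Fin.succ h)) := by
    rcases j with _ | _ | j
    · simp
    · simp
    · rw [separatedExtension_monomial, show (j + 2 + 2 * i - (j + 2 - 2)) / 2 = i + 1 by omega]
  rw [gegenbauerOperator_monomial, map_add, lower_term, separatedExtension_monomial,
    separatedExtension_monomial, half_sub, map_smul, mul_smul_comm,
    psum_two_mul_laplacian_psum_two_pow_mul (isHomogeneous_X_zero_pow_mul_rename_succ hhom j),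
    laplacian_X_zero_pow_mul_rename_succ hharm, Fintype.card_fin, mul_smul_comm]
  push_cast
  module

lemma psum_two_mul_laplacian_separatedExtension (hhom : h.IsHomogeneous l)
    (hharm : laplacian h = 0) {g : R[X]} {D : ℕ} (hg : IsRadiallyHomogenizable g D) :
    psum (Fin (n + 1)) R 2 * laplacian (separatedExtension h D g) =
      separatedExtension h D (gegenbauerOperator (2 * l + n - 1 : R) D g) := by
  rw [g.as_sum_support]
  simp only [map_sum, Finset.mul_sum]
  refine Finset.sum_congr rfl fun j hj ↦ ?_
  obtain ⟨i, rfl⟩ := hg j hj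
  exact psum_two_mul_laplacian_separatedExtension_monomial hhom hharm i j _

end SeparatedExtension

section UnitSphere

lemma eval_smul_of_isHomogeneous {σ R : Type*} [CommSemiring R] {f : MvPolynomial σ R} {e : ℕ}
    (hf : f.IsHomogeneous e) (c : R) (x : σ → R) :
    MvPolynomial.eval (c • x) f = c ^ e * MvPolynomial.eval x f := by
  rw [MvPolynomial.eval_eq, MvPolynomial.eval_eq, Finset.mul_sum]
  refine Finset.sum_congr rfl fun m hm ↦ ?_
  simp only [Pi.smul_apply, smul_eq_mul, mul_pow, Finset.prod_mul_distrib,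
    Finset.prod_pow_eq_pow_sum, ← hf.degree_eq_sum_deg_support hm]
  ring

lemma exists_sum_sq_eq_one_and_smul_eq {σ : Type*} [Fintype σ] [Nonempty σ] (x : σ → ℝ) :
    ∃ (a : ℝ) (v : σ → ℝ), ∑ i, v i ^ 2 = 1 ∧ a • v = x := by
  classical
  rcases eq_or_ne x 0 with rfl | hx
  · exact ⟨0, Pi.single (Classical.arbitrary σ) 1, by simp [Pi.single_apply], zero_smul ..⟩
  have sum_sq_pos : 0 < ∑ i, x i ^ 2 := by
    obtain ⟨i, hi⟩ := Function.ne_iff.mp hx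
    exact Finset.sum_pos' (fun i _ ↦ sq_nonneg (x i)) ⟨i, Finset.mem_univ i, sq_pos_of_ne_zero hi⟩
  refine ⟨√(∑ i, x i ^ 2), (√(∑ i, x i ^ 2))⁻¹ • x, ?_, ?_⟩
  · simp only [Pi.smul_apply, smul_eq_mul, mul_pow, ← Finset.mul_sum, inv_pow,
      Real.sq_sqrt sum_sq_pos.le]
    exact inv_mul_cancel₀ sum_sq_pos.ne'
  · exact smul_inv_smul₀ (Real.sqrt_pos.mpr sum_sq_pos).ne' x

lemma eq_zero_of_forall_sum_sq_eq_one_eval_eq_zero {σ : Type*} [Fintype σ] [Nonempty σ] {e : ℕ}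
    {f : MvPolynomial σ ℝ} (hf : f.IsHomogeneous e)
    (hzero : ∀ v : σ → ℝ, ∑ i, v i ^ 2 = 1 → MvPolynomial.eval v f = 0) : f = 0 := by
  refine MvPolynomial.funext fun x ↦ ?_
  obtain ⟨a, v, hv, rfl⟩ := exists_sum_sq_eq_one_and_smul_eq x
  rw [eval_smul_of_isHomogeneous hf, hzero v hv, mul_zero, map_zero]

lemma exists_cos_eq_and_sin_eq {x y : ℝ} (hxy : x ^ 2 + y ^ 2 = 1) :
    ∃ θ, Real.cos θ = x ∧ Real.sin θ = y := by
  have norm_eq_one : ‖(⟨x, y⟩ : ℂ)‖ = 1 := by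
    rw [Complex.norm_eq_sqrt_sq_add_sq, hxy, Real.sqrt_one]
  refine ⟨Complex.arg ⟨x, y⟩, ?_, ?_⟩
  · simpa [norm_eq_one] using Complex.norm_mul_cos_arg ⟨x, y⟩
  · simpa [norm_eq_one] using Complex.norm_mul_sin_arg ⟨x, y⟩

lemma exists_cons_cos_sin_smul_eq {n : ℕ} [NeZero n] {x : Fin (n + 1) → ℝ}
    (hx : ∑ i, x i ^ 2 = 1) :
    ∃ (θ : ℝ) (v : Fin n → ℝ), ∑ i, v i ^ 2 = 1 ∧ Fin.cons (Real.cos θ) (Real.sin θ • v) = x := by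
  obtain ⟨a, v, hv, htail⟩ := exists_sum_sq_eq_one_and_smul_eq (Fin.tail x)
  have hxa : x 0 ^ 2 + a ^ 2 = 1 := by
    have sum_tail : ∑ i, (Fin.tail x) i ^ 2 = a ^ 2 := by
      simp [← htail, mul_pow, ← Finset.mul_sum, hv]
    rw [← hx, Fin.sum_univ_succ, ← sum_tail]
    rfl
  obtain ⟨θ, hcos, hsin⟩ := exists_cos_eq_and_sin_eq hxa
  refine ⟨θ, v, hv, ?_⟩
  rw [hcos, hsin, htail, Fin.cons_self_tail]

lemma eq_of_forall_sin_ne_zero_eval_cos_eq {p q : ℝ[X]}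
    (hpq : ∀ θ : ℝ, Real.sin θ ≠ 0 → p.eval (Real.cos θ) = q.eval (Real.cos θ)) : p = q := by
  refine Polynomial.eq_of_infinite_eval_eq p q
    ((Set.Ioo_infinite (show (-1 : ℝ) < 1 by norm_num)).mono fun s hs ↦ ?_)
  have sin_pos : 0 < Real.sin (Real.arccos s) := by
    rw [Real.sin_arccos, Real.sqrt_pos]
    nlinarith [hs.1, hs.2]
  simpa [Real.cos_arccos hs.1.le hs.2.le] using hpq _ sin_pos.ne'

end UnitSphere

section SeparatedOnSphere

/-- The restriction of `P` to the unit sphere is the separated function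
`(cos θ, v sin θ) ↦ g (cos θ) * sin θ ^ l * h v`. -/
def IsSeparatedOnSphere {n : ℕ} (P : MvPolynomial (Fin (n + 1)) ℝ) (g : ℝ[X]) (l : ℕ)
    (h : MvPolynomial (Fin n) ℝ) : Prop :=
  ∀ (θ : ℝ) (v : Fin n → ℝ), ∑ i, v i ^ 2 = 1 →
    MvPolynomial.eval (Fin.cons (Real.cos θ) (Real.sin θ • v)) P =
      g.eval (Real.cos θ) * Real.sin θ ^ l * MvPolynomial.eval v h

variable {n l : ℕ} {h : MvPolynomial (Fin n) ℝ}

lemma eval_cos_sin_psum_two {v : Fin n → ℝ} (hv : ∑ i, v i ^ 2 = 1) (θ : ℝ) :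
    MvPolynomial.eval (Fin.cons (Real.cos θ) (Real.sin θ • v)) (psum (Fin (n + 1)) ℝ 2) = 1 := by
  simp [psum, Fin.sum_univ_succ, mul_pow, ← Finset.mul_sum, hv]

lemma isSeparatedOnSphere_separatedExtension (hhom : h.IsHomogeneous l) (D : ℕ) (g : ℝ[X]) :
    IsSeparatedOnSphere (separatedExtension h D g) g l h := by
  intro θ v hv
  have eval_rename_succ : MvPolynomial.eval (Fin.cons (Real.cos θ) (Real.sin θ • v))
      (rename Fin.succ h) = Real.sin θ ^ l * MvPolynomial.eval v h := by
    rw [MvPolynomial.eval_rename, ← eval_smul_of_isHomogeneous hhom]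
    rfl
  induction g using Polynomial.induction_on' with
  | add p q hp hq => simp only [map_add, Polynomial.eval_add, hp, hq, add_mul]
  | monomial j a =>
    rw [separatedExtension_monomial, MvPolynomial.smul_eval, map_mul, map_mul, map_pow, map_pow,
      eval_cos_sin_psum_two hv, eval_rename_succ, MvPolynomial.eval_X, Fin.cons_zero,
      Polynomial.eval_monomial]
    ring

namespace IsSeparatedOnSphere

variable {g g₁ g₂ : ℝ[X]} {P P₁ P₂ : MvPolynomial (Fin (n + 1)) ℝ}

lemma psum_two_pow_mul (hP : IsSeparatedOnSphere P g l h) (N : ℕ) :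
    IsSeparatedOnSphere (psum (Fin (n + 1)) ℝ 2 ^ N * P) g l h := fun θ v hv ↦ by
  rw [map_mul, map_pow, eval_cos_sin_psum_two hv, one_pow, one_mul, hP θ v hv]

lemma extension_unique [NeZero n] {e : ℕ} (hP₁ : IsSeparatedOnSphere P₁ g l h)
    (hP₂ : IsSeparatedOnSphere P₂ g l h) (hom₁ : P₁.IsHomogeneous e) (hom₂ : P₂.IsHomogeneous e) :
    P₁ = P₂ := by
  refine sub_eq_zero.mp
    (eq_zero_of_forall_sum_sq_eq_one_eval_eq_zero (hom₁.sub hom₂) fun x hx ↦ ?_)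
  obtain ⟨θ, v, hv, rfl⟩ := exists_cons_cos_sin_smul_eq hx
  rw [map_sub, hP₁ θ v hv, hP₂ θ v hv, sub_self]

lemma profile_unique [NeZero n] (hh : h ≠ 0) (hhom : h.IsHomogeneous l)
    (hP₁ : IsSeparatedOnSphere P g₁ l h) (hP₂ : IsSeparatedOnSphere P g₂ l h) : g₁ = g₂ := by
  obtain ⟨v, hv, hv_ne⟩ : ∃ v : Fin n → ℝ, ∑ i, v i ^ 2 = 1 ∧ MvPolynomial.eval v h ≠ 0 := by
    by_contra! hzero
    exact hh (eq_zero_of_forall_sum_sq_eq_one_eval_eq_zero hhom hzero)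
  refine eq_of_forall_sin_ne_zero_eval_cos_eq fun θ hθ ↦
    mul_right_cancel₀ (pow_ne_zero l hθ) (mul_right_cancel₀ hv_ne ?_)
  rw [← hP₁ θ v hv, hP₂ θ v hv]

lemma comp_neg_X {d : ℕ} (hhom : h.IsHomogeneous l) (hPhom : P.IsHomogeneous (l + d))
    (hP : IsSeparatedOnSphere P g l h) :
    IsSeparatedOnSphere P ((-1 : ℝ) ^ d • g.comp (-Polynomial.X)) l h := by
  intro θ v hv
  have antipode : (Fin.cons (Real.cos θ) (Real.sin θ • v) : Fin (n + 1) → ℝ) =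
      (-1 : ℝ) • Fin.cons (Real.cos (Real.pi - θ)) (Real.sin (Real.pi - θ) • -v) := by
    ext i
    refine Fin.cases ?_ (fun i ↦ ?_) i <;> simp
  have eval_neg : MvPolynomial.eval (-v) h = (-1) ^ l * MvPolynomial.eval v h := by
    rw [← eval_smul_of_isHomogeneous hhom, neg_one_smul]
  have sign : (-1 : ℝ) ^ l * (-1) ^ l = 1 := by rw [← mul_pow]; simp
  rw [antipode, eval_smul_of_isHomogeneous hPhom, hP _ _ (by simpa using hv), eval_neg,
    Real.cos_pi_sub, Real.sin_pi_sub, Polynomial.eval_smul, Polynomial.eval_comp,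
    Polynomial.eval_neg, Polynomial.eval_X, smul_eq_mul, pow_add]
  linear_combination ((-1) ^ d * g.eval (-Real.cos θ) * Real.sin θ ^ l * MvPolynomial.eval v h) *
    sign

lemma isRadiallyHomogenizable [NeZero n] {d : ℕ} (hh : h ≠ 0) (hhom : h.IsHomogeneous l)
    (hPhom : P.IsHomogeneous (l + d)) (hP : IsSeparatedOnSphere P g l h) :
    IsRadiallyHomogenizable g (d + 2 * g.natDegree) := by
  refine isRadiallyHomogenizable_of_comp_neg_X_eq ?_
  nth_rw 2 [hP.profile_unique hh hhom (hP.comp_neg_X hhom hPhom)]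
  rw [smul_smul, ← mul_pow]
  simp

end IsSeparatedOnSphere

lemma separatedExtension_injective [NeZero n] (hh : h ≠ 0) (hhom : h.IsHomogeneous l) (D : ℕ) :
    Function.Injective (separatedExtension h D) := fun g₁ g₂ hg ↦
  (isSeparatedOnSphere_separatedExtension hhom D g₁).profile_unique hh hhom
    (hg ▸ isSeparatedOnSphere_separatedExtension hhom D g₂)

lemma laplacian_separatedExtension_eq_zero (hhom : h.IsHomogeneous l) (hharm : laplacian h = 0)
    {g : ℝ[X]} {d : ℕ} (hg : IsRadiallyHomogenizable g d)
    (hode : gegenbauerOperator (2 * l + n - 1 : ℝ) d g = 0) :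
    laplacian (separatedExtension h d g) = 0 := by
  have product_eq_zero := psum_two_mul_laplacian_separatedExtension hhom hharm hg
  rw [hode, map_zero] at product_eq_zero
  exact (mul_eq_zero.mp product_eq_zero).resolve_left psum_two_ne_zero

lemma IsSeparatedOnSphere.gegenbauerOperator_eq_zero [NeZero n] {d : ℕ} {g : ℝ[X]}
    {P : MvPolynomial (Fin (n + 1)) ℝ} (hh : h ≠ 0) (hhom : h.IsHomogeneous l)
    (hharm : laplacian h = 0) (hPhom : P.IsHomogeneous (l + d)) (hPharm : laplacian P = 0)
    (hP : IsSeparatedOnSphere P g l h) :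
    gegenbauerOperator (2 * l + n - 1 : ℝ) d g = 0 := by
  have hg := hP.isRadiallyHomogenizable hh hhom hPhom
  generalize g.natDegree = N at hg
  set ρ := psum (Fin (n + 1)) ℝ 2
  have extension_eq : separatedExtension h (d + 2 * N) g = ρ ^ N * P := by
    refine (isSeparatedOnSphere_separatedExtension hhom _ g).extension_unique
      (hP.psum_two_pow_mul N) (isHomogeneous_separatedExtension hhom hg) ?_
    rw [show l + (d + 2 * N) = 2 * N + (l + d) by ring]
    exact ((isHomogeneous_psum 2).pow N).mul hPhom
  set eigenvalue : ℝ := 2 * N * (2 * N + 2 * (l + d : ℕ) + Fintype.card (Fin (n + 1)) - 2)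
    with eigenvalue_def
  have operator_eq : gegenbauerOperator (2 * l + n - 1 : ℝ) (d + 2 * N : ℕ) g =
      gegenbauerOperator (2 * l + n - 1 : ℝ) d g + eigenvalue • g := by
    rw [gegenbauerOperator_eq_add_smul _ (d : ℝ), eigenvalue_def, Fintype.card_fin]
    congr 2
    push_cast
    ring
  refine separatedExtension_injective hh hhom (d + 2 * N) ?_
  calc separatedExtension h (d + 2 * N) (gegenbauerOperator (2 * l + n - 1 : ℝ) d g)
      = ρ * laplacian (ρ ^ N * P) - eigenvalue • (ρ ^ N * P) := by
        rw [← extension_eq, psum_two_mul_laplacian_separatedExtension hhom hharm hg, operator_eq,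
          map_add, map_smul, add_sub_cancel_right]
    _ = separatedExtension h (d + 2 * N) 0 := by
        rw [psum_two_mul_laplacian_psum_two_pow_mul hPhom, hPharm, mul_zero, zero_add, sub_self,
          map_zero]

end SeparatedOnSphere

theorem separated_variables_harmonicity_general (n : ℕ) [NeZero n] (k l : ℕ) (hlk : l ≤ k)
    (r : ℝ) (hr : r = (1 - (n : ℝ)) / 2)
    (h : MvPolynomial (Fin n) ℝ) (hh : h ≠ 0) (hhom : h.IsHomogeneous l)
    (hharm : laplacian h = 0) (g : ℝ[X]) :
    (∃ P : MvPolynomial (Fin (n + 1)) ℝ,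
        P.IsHomogeneous k ∧ laplacian P = 0 ∧ IsSeparatedOnSphere P g l h) ↔
      gegenbauerOperator (2 * ((l : ℝ) - r)) ((k - l : ℕ) : ℝ) g = 0 := by
  obtain ⟨d, rfl⟩ := Nat.exists_eq_add_of_le hlk
  have parameter_eq : 2 * ((l : ℝ) - r) = 2 * l + n - 1 := by rw [hr]; ring
  rw [parameter_eq, Nat.add_sub_cancel_left]
  constructor
  · rintro ⟨P, hPhom, hPharm, hP⟩
    exact hP.gegenbauerOperator_eq_zero hh hhom hharm hPhom hPharm
  · intro hode
    have parameter_nonneg : (0 : ℝ) ≤ 2 * l + n - 1 := by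
      have : (1 : ℝ) ≤ n := mod_cast NeZero.one_le
      linarith [l.cast_nonneg (α := ℝ)]
    have hg := isRadiallyHomogenizable_of_gegenbauerOperator_eq_zero parameter_nonneg hode
    exact ⟨separatedExtension h d g, isHomogeneous_separatedExtension hhom hg,
      laplacian_separatedExtension_eq_zero hhom hharm hg hode,
      isSeparatedOnSphere_separatedExtension hhom d g⟩

/-- `g(cos θ) sin^l θ · h_l(x̂)` extends to a degree-`k` harmonic homogeneous polynomial on
`ℝ^{n+1}` (i.e. lies in `H_k(Sⁿ)`) if and only if `g` satisfies the Gegenbauer differential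
equation `(1-s²)g'' - (2(l-r)+1)s g' + d(2(l-r)+d)g = 0`, where `r = (1-n)/2`, `d = k-l`. -/
theorem separated_variables_harmonicity (n : ℕ) (hn : 2 ≤ n) (k l : ℕ) (hlk : l ≤ k)
    (r : ℝ) (hr : r = (1 - (n : ℝ)) / 2)
    (h : MvPolynomial (Fin n) ℝ) (hh : h ≠ 0) (hhom : h.IsHomogeneous l)
    (hharm : ∑ i : Fin n, pderiv i (pderiv i h) = 0)
    (g : Polynomial ℝ) :
    (∃ P : MvPolynomial (Fin (n + 1)) ℝ,
        P.IsHomogeneous k ∧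
        (∑ i : Fin (n + 1), pderiv i (pderiv i P) = 0) ∧
        ∀ (θ : ℝ) (v : Fin n → ℝ), (∑ i, (v i) ^ 2) = 1 →
          MvPolynomial.eval (Fin.cons (Real.cos θ) (Real.sin θ • v)) P
            = g.eval (Real.cos θ) * (Real.sin θ) ^ l * MvPolynomial.eval v h) ↔
    ((1 - Polynomial.X ^ 2) * derivative (derivative g)
        - Polynomial.C (2 * ((l : ℝ) - r) + 1) * Polynomial.X * derivative g
        + Polynomial.C (((k - l : ℕ) : ℝ) * (2 * ((l : ℝ) - r) + ((k - l : ℕ) : ℝ))) * g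
      = 0) := by
  have : NeZero n := ⟨by omega⟩
  exact separated_variables_harmonicity_general n k l hlk r hr h hh hhom hharm g
end
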